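/- Let (V,E) be any member of the SpGEMM DAG family 𝒢(A,B) and let S ≥ 1 be an integer. Then every S-partition of (V,E) has at least h parts, where h is the minimum cardinality of a partition {𝒱_1,…,𝒱_h} of the fine-grained vertex set 𝒱 satisfying |W^A(𝒱_i)| ≤ S, |W^B(𝒱_i)| ≤ S, and |W^C(𝒱_i)| ≤ S for each i. -/

import Mathlib

/-- The multiplication set `V^m`. -/
def Vm (SA SB : Set (ℕ × ℕ)) : Set (ℕ × ℕ × ℕ) :=
  {t | (t.1, t.2.1) ∈ SA ∧ (t.2.1, t.2.2) ∈ SB}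

/-- The nonzero structure `S_C` of the output matrix. -/
def SC (SA SB : Set (ℕ × ℕ)) : Set (ℕ × ℕ) :=
  {p | ∃ k, (p.1, k) ∈ SA ∧ (k, p.2) ∈ SB}

/-- A member of the SpGEMM DAG family `𝒢(A,B)`: a finite DAG whose vertices are
the pairwise distinct input vertices `v^A_{ik}` (`(i,k) ∈ S_A`) and `v^B_{kj}`
(`(k,j) ∈ S_B`), the multiplication vertices `v_{ikj}` (`(i,k,j) ∈ V^m`), and
the vertices of a summation tree `T_{ij}` for each `(i,j) ∈ S_C`; each `T_{ij}`
is a finite directed tree oriented toward a single root `root (i,j)`, whose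
leaves (zero-indegree vertices) are exactly the multiplication vertices
`v_{ikj}`, and whose non-leaf vertices are distinct from the vertices of every
other tree and from all input and multiplication vertices.  The edges are the
input edges `(v^A_{ik}, v_{ikj})` and `(v^B_{kj}, v_{ikj})` for
`(i,k,j) ∈ V^m` together with all summation-tree edges. -/
structure SpGEMMDag (SA SB : Set (ℕ × ℕ)) where
  /-- the vertex type -/
  V : Type
  /-- the DAG is finite -/
  finV : Finite V
  /-- the edge relation -/
  E : V → V → Prop
  /-- input vertices `v^A_{ik}` -/
  vA : ℕ × ℕ → V
  /-- input vertices `v^B_{kj}` -/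
  vB : ℕ × ℕ → V
  /-- multiplication vertices `v_{ikj}` -/
  vm : ℕ × ℕ × ℕ → V
  /-- vertex set of the summation tree `T_{ij}` -/
  tree : ℕ × ℕ → Set V
  /-- edge relation of the summation tree `T_{ij}` -/
  treeE : ℕ × ℕ → V → V → Prop
  /-- root of the summation tree `T_{ij}` -/
  root : ℕ × ℕ → V
  /-- the graph is acyclic -/
  acyclic : ∀ v : V, ¬ Relation.TransGen E v v
  /-- the `v^A` vertices are pairwise distinct -/
  vA_inj : Set.InjOn vA SA
  /-- the `v^B` vertices are pairwise distinct -/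
  vB_inj : Set.InjOn vB SB
  /-- the multiplication vertices are pairwise distinct -/
  vm_inj : Set.InjOn vm (Vm SA SB)
  /-- the `v^A` and `v^B` vertices are distinct -/
  vA_ne_vB : ∀ p ∈ SA, ∀ q ∈ SB, vA p ≠ vB q
  /-- input vertices `v^A` do not lie in any summation tree -/
  vA_notin_tree : ∀ p ∈ SA, ∀ q ∈ SC SA SB, vA p ∉ tree q
  /-- input vertices `v^B` do not lie in any summation tree -/
  vB_notin_tree : ∀ p ∈ SB, ∀ q ∈ SC SA SB, vB p ∉ tree q
  /-- distinct summation trees are vertex-disjoint -/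
  trees_disjoint : ∀ p ∈ SC SA SB, ∀ q ∈ SC SA SB, p ≠ q → Disjoint (tree p) (tree q)
  /-- `v_{ikj}` is a vertex of `T_{ij}` -/
  vm_mem_tree : ∀ t ∈ Vm SA SB, vm t ∈ tree (t.1, t.2.2)
  /-- `v_{ikj}` lies in no tree other than `T_{ij}` -/
  vm_mem_tree_only : ∀ t ∈ Vm SA SB, ∀ p ∈ SC SA SB, vm t ∈ tree p → p = (t.1, t.2.2)
  /-- every vertex is an input vertex or a summation-tree vertex (multiplication
  vertices are the leaves of the summation trees) -/
  vertex_cases : ∀ v : V, (∃ p ∈ SA, v = vA p) ∨ (∃ p ∈ SB, v = vB p) ∨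
      (∃ p ∈ SC SA SB, v ∈ tree p)
  /-- the root of `T_{ij}` is a vertex of `T_{ij}` -/
  root_mem : ∀ p ∈ SC SA SB, root p ∈ tree p
  /-- tree edges join vertices of their tree -/
  treeE_mem : ∀ p u v, treeE p u v → p ∈ SC SA SB ∧ u ∈ tree p ∧ v ∈ tree p
  /-- all tree edges are oriented toward the root: every non-root tree vertex
  has exactly one outgoing tree edge -/
  succ_unique : ∀ p ∈ SC SA SB, ∀ u ∈ tree p, u ≠ root p → ∃! v, treeE p u v
  /-- the root has no outgoing tree edge -/
  root_no_succ : ∀ p ∈ SC SA SB, ∀ v, ¬ treeE p (root p) v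
  /-- the zero-indegree vertices (leaves) of `T_{ij}` are exactly the
  multiplication vertices `v_{ikj}` -/
  leaves_iff : ∀ p ∈ SC SA SB, ∀ v ∈ tree p,
      ((∀ u, ¬ treeE p u v) ↔ ∃ k, (p.1, k, p.2) ∈ Vm SA SB ∧ v = vm (p.1, k, p.2))
  /-- the edge set consists exactly of the input edges and the tree edges -/
  edge_iff : ∀ u v, E u v ↔
      ((∃ t ∈ Vm SA SB, (u = vA (t.1, t.2.1) ∨ u = vB (t.2.1, t.2.2)) ∧ v = vm t) ∨
       (∃ p, treeE p u v))

/-- An input of the DAG: a vertex with no incoming edges. -/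
def SpGEMMDag.IsInput {SA SB : Set (ℕ × ℕ)} (G : SpGEMMDag SA SB) (v : G.V) : Prop :=
  ∀ u, ¬ G.E u v

/-- `D` is a dominator set of `U`: every directed path from an input to a
vertex of `U` contains a vertex of `D`. -/
def SpGEMMDag.IsDominator {SA SB : Set (ℕ × ℕ)} (G : SpGEMMDag SA SB)
    (U D : Set G.V) : Prop :=
  ∀ (a : G.V) (l : List G.V), List.Chain G.E a l → G.IsInput a →
    (a :: l).getLast (List.cons_ne_nil a l) ∈ U → ∃ d ∈ D, d ∈ a :: l

/-- The minimum set of `U`: elements of `U` with no successor in `U`. -/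
def SpGEMMDag.minSet {SA SB : Set (ℕ × ℕ)} (G : SpGEMMDag SA SB)
    (U : Set G.V) : Set G.V :=
  {u ∈ U | ∀ v, G.E u v → v ∉ U}

/-- Vertices of the fine-grained SpGEMM hypergraph. -/
inductive FGVertex : Type
  | mult (i k j : ℕ)
  | nzA (i k : ℕ)
  | nzB (k j : ℕ)
  | nzC (i j : ℕ)
deriving DecidableEq

/-- The fine-grained vertex set `𝒱`. -/
def FGV (SA SB : Set (ℕ × ℕ)) : Set FGVertex :=
  {v | (∃ t ∈ Vm SA SB, v = .mult t.1 t.2.1 t.2.2) ∨ (∃ p ∈ SA, v = .nzA p.1 p.2) ∨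
       (∃ p ∈ SB, v = .nzB p.1 p.2) ∨ (∃ p ∈ SC SA SB, v = .nzC p.1 p.2)}

/-- The net `n^A_{ik}`. -/
def netA (SB : Set (ℕ × ℕ)) (i k : ℕ) : Set FGVertex :=
  {v | (∃ j, (k, j) ∈ SB ∧ v = .mult i k j) ∨ v = .nzA i k}

/-- The net `n^B_{kj}`. -/
def netB (SA : Set (ℕ × ℕ)) (k j : ℕ) : Set FGVertex :=
  {v | (∃ i, (i, k) ∈ SA ∧ v = .mult i k j) ∨ v = .nzB k j}

/-- The net `n^C_{ij}`. -/
def netC (SA SB : Set (ℕ × ℕ)) (i j : ℕ) : Set FGVertex :=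
  {v | (∃ k, (i, k) ∈ SA ∧ (k, j) ∈ SB ∧ v = .mult i k j) ∨ v = .nzC i j}

/-- `W^A(𝒱')`: the `A`-nets meeting `𝒱'`. -/
def WA (SA SB : Set (ℕ × ℕ)) (X : Set FGVertex) : Set (ℕ × ℕ) :=
  {p ∈ SA | (netA SB p.1 p.2 ∩ X).Nonempty}

/-- `W^B(𝒱')`: the `B`-nets meeting `𝒱'`. -/
def WB (SA SB : Set (ℕ × ℕ)) (X : Set FGVertex) : Set (ℕ × ℕ) :=
  {p ∈ SB | (netB SA p.1 p.2 ∩ X).Nonempty}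

/-- `W^C(𝒱')`: the `C`-nets meeting `𝒱'`. -/
def WC (SA SB : Set (ℕ × ℕ)) (X : Set FGVertex) : Set (ℕ × ℕ) :=
  {p ∈ SC SA SB | (netC SA SB p.1 p.2 ∩ X).Nonempty}

/-- An indexed partition of the set `X` into `n` (possibly empty) parts. -/
def IsIndexedPartition {α : Type*} (X : Set α) {n : ℕ} (P : Fin n → Set α) : Prop :=
  (∀ i, P i ⊆ X) ∧ (⋃ i, P i) = X ∧ ∀ i j, i ≠ j → Disjoint (P i) (P j)

/-- An `S`-partition of the DAG `G`: a partition `{V_1,…,V_h}` of the vertices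
such that each part has a dominator set of size at most `S`, each part has
minimum set of size at most `S`, and there is no cyclic dependence among the
parts, where `V_i` depends on `V_j` if `(V_i × V_j) ∩ E ≠ ∅`. -/
def SpGEMMDag.IsSPartition {SA SB : Set (ℕ × ℕ)} (G : SpGEMMDag SA SB)
    (S : ℕ) {h : ℕ} (P : Fin h → Set G.V) : Prop :=
  ((⋃ i, P i) = Set.univ ∧ (∀ i, (P i).Nonempty) ∧
    ∀ i j, i ≠ j → Disjoint (P i) (P j)) ∧
  (∀ i, ∃ D : Set G.V, G.IsDominator (P i) D ∧ D.ncard ≤ S) ∧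
  (∀ i, (G.minSet (P i)).ncard ≤ S) ∧
  (∀ i : Fin h, ¬ Relation.TransGen
      (fun a b : Fin h => a ≠ b ∧ ∃ u ∈ P a, ∃ v ∈ P b, G.E u v) i i)

/-- If every element of `s` is related to some element of the finite set `t`, and no element
of `t` is related to two elements of `s`, then `s` has at most as many elements as `t`. -/
theorem Set.ncard_le_ncard_of_leftUnique {α β : Type*} {s : Set α} {t : Set β} (R : α → β → Prop)
    (ht : t.Finite) (hR : ∀ a ∈ s, ∃ b ∈ t, R a b)
    (huniq : ∀ a ∈ s, ∀ a' ∈ s, ∀ b, R a b → R a' b → a = a') : s.ncard ≤ t.ncard := by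
  rcases s.eq_empty_or_nonempty with rfl | ⟨a₀, ha₀⟩
  · simp
  obtain ⟨b₀, -⟩ := hR a₀ ha₀
  have : Nonempty β := ⟨b₀⟩
  choose! f hft hfR using hR
  exact Set.ncard_le_ncard_of_injOn f hft
    (fun a ha a' ha' e => huniq a ha a' ha' (f a) (hfR a ha) (e ▸ hfR a' ha')) ht

namespace SpGEMMDag

variable {SA SB : Set (ℕ × ℕ)} (G : SpGEMMDag SA SB)

theorem mem_SC_of_mem_Vm {t : ℕ × ℕ × ℕ} (ht : t ∈ Vm SA SB) : (t.1, t.2.2) ∈ SC SA SB :=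
  ⟨t.2.1, ht.1, ht.2⟩

theorem exists_mem_tree_of_edge {u v : G.V} (huv : G.E u v) : ∃ p ∈ SC SA SB, v ∈ G.tree p := by
  rcases (G.edge_iff u v).1 huv with ⟨t, ht, -, rfl⟩ | ⟨p, hp⟩
  · exact ⟨_, mem_SC_of_mem_Vm ht, G.vm_mem_tree t ht⟩
  · exact ⟨p, (G.treeE_mem p u v hp).1, (G.treeE_mem p u v hp).2.2⟩

theorem isInput_vA {p : ℕ × ℕ} (hp : p ∈ SA) : G.IsInput (G.vA p) := fun _ hu =>
  let ⟨q, hq, hv⟩ := G.exists_mem_tree_of_edge hu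
  G.vA_notin_tree p hp q hq hv

theorem isInput_vB {p : ℕ × ℕ} (hp : p ∈ SB) : G.IsInput (G.vB p) := fun _ hu =>
  let ⟨q, hq, hv⟩ := G.exists_mem_tree_of_edge hu
  G.vB_notin_tree p hp q hq hv

theorem vA_ne_vm {p : ℕ × ℕ} (hp : p ∈ SA) {t : ℕ × ℕ × ℕ} (ht : t ∈ Vm SA SB) :
    G.vA p ≠ G.vm t := fun e =>
  G.vA_notin_tree p hp _ (mem_SC_of_mem_Vm ht) (e ▸ G.vm_mem_tree t ht)

theorem vB_ne_vm {p : ℕ × ℕ} (hp : p ∈ SB) {t : ℕ × ℕ × ℕ} (ht : t ∈ Vm SA SB) :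
    G.vB p ≠ G.vm t := fun e =>
  G.vB_notin_tree p hp _ (mem_SC_of_mem_Vm ht) (e ▸ G.vm_mem_tree t ht)

theorem tree_eq_of_mem {p q : ℕ × ℕ} (hp : p ∈ SC SA SB) (hq : q ∈ SC SA SB) {v : G.V}
    (hvp : v ∈ G.tree p) (hvq : v ∈ G.tree q) : p = q := by
  by_contra hne
  exact Set.disjoint_left.1 (G.trees_disjoint p hp q hq hne) hvp hvq

theorem mem_tree_of_edge {p : ℕ × ℕ} (hp : p ∈ SC SA SB) {u v : G.V} (hu : u ∈ G.tree p)
    (huv : G.E u v) : v ∈ G.tree p := by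
  rcases (G.edge_iff u v).1 huv with ⟨t, ht, rfl | rfl, -⟩ | ⟨q, hq⟩
  · exact absurd hu (G.vA_notin_tree _ ht.1 p hp)
  · exact absurd hu (G.vB_notin_tree _ ht.2 p hp)
  · obtain ⟨hqC, huq, hvq⟩ := G.treeE_mem q u v hq
    rwa [G.tree_eq_of_mem hp hqC hu huq]

theorem wellFounded_flip_edge : WellFounded (flip G.E) := by
  have := G.finV
  have hirr : Std.Irrefl (flip (Relation.TransGen G.E)) := ⟨G.acyclic⟩
  have htr : IsTrans G.V (flip (Relation.TransGen G.E)) := ⟨fun _ _ _ h₁ h₂ => h₂.trans h₁⟩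
  exact Subrelation.wf (r := flip (Relation.TransGen G.E)) (fun h => Relation.TransGen.single h)
    (Finite.wellFounded_of_trans_of_irrefl (flip (Relation.TransGen G.E)))

/-- A set meeting a summation tree has a minimum-set element in that tree. -/
theorem exists_mem_minSet_of_mem_tree {p : ℕ × ℕ} (hp : p ∈ SC SA SB) {U : Set G.V} {u : G.V}
    (hu : u ∈ G.tree p) (huU : u ∈ U) : ∃ v ∈ G.minSet U, v ∈ G.tree p := by
  obtain ⟨v, ⟨hvU, hv⟩, hmax⟩ := G.wellFounded_flip_edge.has_min (U ∩ G.tree p) ⟨u, huU, hu⟩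
  exact ⟨v, ⟨hvU, fun w hvw hwU => hmax w ⟨hwU, G.mem_tree_of_edge hp hv hvw⟩ hvw⟩, hv⟩

variable {G} in
theorem IsDominator.mem_of_isInput {U D : Set G.V} (hD : G.IsDominator U D) {a : G.V}
    (ha : G.IsInput a) (haU : a ∈ U) : a ∈ D := by
  obtain ⟨d, hd, hmem⟩ := hD a [] (List.IsChain.singleton a) ha haU
  rwa [List.mem_singleton.1 hmem] at hd

variable {G} in
theorem IsDominator.mem_or_mem_of_edge {U D : Set G.V} (hD : G.IsDominator U D) {a b : G.V}
    (ha : G.IsInput a) (hab : G.E a b) (hbU : b ∈ U) : a ∈ D ∨ b ∈ D := by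
  obtain ⟨d, hd, hmem⟩ := hD a [b] (List.isChain_pair.2 hab) ha hbU
  rcases List.mem_pair.1 hmem with rfl | rfl
  exacts [.inl hd, .inr hd]

/-- The DAG vertex representing a fine-grained vertex; an output nonzero is represented by the
root of its summation tree. -/
def ofFGVertex : FGVertex → G.V
  | .mult i k j => G.vm (i, k, j)
  | .nzA i k => G.vA (i, k)
  | .nzB k j => G.vB (k, j)
  | .nzC i j => G.root (i, j)

/-- The fine-grained vertices represented in `U`. -/
def fgPart (U : Set G.V) : Set FGVertex := {x ∈ FGV SA SB | G.ofFGVertex x ∈ U}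

theorem ncard_WA_fgPart_le {U D : Set G.V} (hD : G.IsDominator U D) :
    (WA SA SB (G.fgPart U)).ncard ≤ D.ncard := by
  have := G.finV
  refine Set.ncard_le_ncard_of_leftUnique
    (fun p d => d = G.vA p ∨ ∃ j, (p.1, p.2, j) ∈ Vm SA SB ∧ d = G.vm (p.1, p.2, j))
    D.toFinite ?_ ?_
  · rintro p ⟨hp, x, ⟨j, hj, rfl⟩ | rfl, -, hx⟩
    · have ht : (p.1, p.2, j) ∈ Vm SA SB := ⟨hp, hj⟩
      rcases hD.mem_or_mem_of_edge (G.isInput_vA hp)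
        ((G.edge_iff _ _).2 (.inl ⟨_, ht, .inl rfl, rfl⟩)) hx with h | h
      exacts [⟨_, h, .inl rfl⟩, ⟨_, h, .inr ⟨j, ht, rfl⟩⟩]
    · exact ⟨_, hD.mem_of_isInput (G.isInput_vA hp) hx, .inl rfl⟩
  · rintro p ⟨hp, -⟩ q ⟨hq, -⟩ d (rfl | ⟨j, hj, rfl⟩) (e | ⟨j', hj', e⟩)
    · exact G.vA_inj hp hq e
    · exact absurd e (G.vA_ne_vm hp hj')
    · exact absurd e.symm (G.vA_ne_vm hq hj)
    · have := G.vm_inj hj hj' e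
      simp only [Prod.mk.injEq] at this
      exact Prod.ext this.1 this.2.1

theorem ncard_WB_fgPart_le {U D : Set G.V} (hD : G.IsDominator U D) :
    (WB SA SB (G.fgPart U)).ncard ≤ D.ncard := by
  have := G.finV
  refine Set.ncard_le_ncard_of_leftUnique
    (fun p d => d = G.vB p ∨ ∃ i, (i, p.1, p.2) ∈ Vm SA SB ∧ d = G.vm (i, p.1, p.2))
    D.toFinite ?_ ?_
  · rintro p ⟨hp, x, ⟨i, hi, rfl⟩ | rfl, -, hx⟩
    · have ht : (i, p.1, p.2) ∈ Vm SA SB := ⟨hi, hp⟩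
      rcases hD.mem_or_mem_of_edge (G.isInput_vB hp)
        ((G.edge_iff _ _).2 (.inl ⟨_, ht, .inr rfl, rfl⟩)) hx with h | h
      exacts [⟨_, h, .inl rfl⟩, ⟨_, h, .inr ⟨i, ht, rfl⟩⟩]
    · exact ⟨_, hD.mem_of_isInput (G.isInput_vB hp) hx, .inl rfl⟩
  · rintro p ⟨hp, -⟩ q ⟨hq, -⟩ d (rfl | ⟨i, hi, rfl⟩) (e | ⟨i', hi', e⟩)
    · exact G.vB_inj hp hq e
    · exact absurd e (G.vB_ne_vm hp hi')
    · exact absurd e.symm (G.vB_ne_vm hq hi)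
    · have := G.vm_inj hi hi' e
      simp only [Prod.mk.injEq] at this
      exact Prod.ext this.2.1 this.2.2

theorem ncard_WC_fgPart_le (U : Set G.V) :
    (WC SA SB (G.fgPart U)).ncard ≤ (G.minSet U).ncard := by
  have := G.finV
  refine Set.ncard_le_ncard_of_leftUnique (fun p v => v ∈ G.tree p) (Set.toFinite _) ?_
    fun p hp q hq v => G.tree_eq_of_mem hp.1 hq.1
  rintro p ⟨hp, x, ⟨k, hA, hB, rfl⟩ | rfl, -, hx⟩
  · exact G.exists_mem_minSet_of_mem_tree hp (G.vm_mem_tree (p.1, k, p.2) ⟨hA, hB⟩) hx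
  · exact G.exists_mem_minSet_of_mem_tree hp (G.root_mem p hp) hx

theorem isIndexedPartition_fgPart {n : ℕ} {P : Fin n → Set G.V} (hcover : ⋃ i, P i = Set.univ)
    (hdisj : ∀ i j, i ≠ j → Disjoint (P i) (P j)) :
    IsIndexedPartition (FGV SA SB) fun i => G.fgPart (P i) := by
  refine ⟨fun i x hx => hx.1, Set.Subset.antisymm (Set.iUnion_subset fun i x hx => hx.1) ?_,
    fun i j hij => Set.disjoint_left.2 fun x hi hj =>
      Set.disjoint_left.1 (hdisj i j hij) hi.2 hj.2⟩
  intro x hx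
  obtain ⟨i, hi⟩ := Set.mem_iUnion.1 (hcover.symm ▸ Set.mem_univ (G.ofFGVertex x))
  exact Set.mem_iUnion.2 ⟨i, hx, hi⟩

end SpGEMMDag

/-- Every `S`-partition of a member of `𝒢(A,B)` has at least
`h` parts, where `h` is the minimum cardinality of a partition `{𝒱_1,…,𝒱_h}`
of the fine-grained vertex set `𝒱` satisfying `|W^A(𝒱_i)| ≤ S`,
`|W^B(𝒱_i)| ≤ S`, and `|W^C(𝒱_i)| ≤ S` for each `i`. -/
theorem spartition_parts_lower_bound
    (SA SB : Set (ℕ × ℕ)) (G : SpGEMMDag SA SB)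
    (S : ℕ) (hS : 1 ≤ S) (h : ℕ)
    (hmin : IsLeast {n : ℕ | ∃ Q : Fin n → Set FGVertex,
        IsIndexedPartition (FGV SA SB) Q ∧
        ∀ i, (WA SA SB (Q i)).ncard ≤ S ∧ (WB SA SB (Q i)).ncard ≤ S ∧
          (WC SA SB (Q i)).ncard ≤ S} h)
    (h' : ℕ) (P : Fin h' → Set G.V) (hP : G.IsSPartition S P) :
    h ≤ h' := by
  obtain ⟨⟨hcover, -, hdisj⟩, hdom, hminSet, -⟩ := hP
  refine hmin.2 ⟨fun i => G.fgPart (P i), G.isIndexedPartition_fgPart hcover hdisj, fun i => ?_⟩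
  obtain ⟨D, hD, hDS⟩ := hdom i
  exact ⟨(G.ncard_WA_fgPart_le hD).trans hDS, (G.ncard_WB_fgPart_le hD).trans hDS,
    (G.ncard_WC_fgPart_le (P i)).trans (hminSet i)⟩
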